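/- arXiv:1506.02109 — 6 statements merged into one kernel-verified Lean document; each statement's English description precedes it below -/
import Mathlib

section
/- Let θ : G → ℂˣ be a character. Then θ(J)^d = 1, and for every integer a with θ(J) = exp(2πi·a/d) there exists a unique group homomorphism χ̂ : Γ → ℂˣ such that χ̂(g) = θ(g) for all g ∈ G and χ̂(r(λ)) = λ^a for all λ ∈ ℂˣ. In particular every character of G admits a lift to Γ. -/
open Matrix Complex

/-- The distinguished `d`-th root of unity `exp(2πi/d)` as a unit of `ℂ`. -/
noncomputable def primRootUnit (d : ℕ) : ℂˣ :=
  Units.mk0 (Complex.exp (2 * (Real.pi : ℂ) * Complex.I / (d : ℂ))) (Complex.exp_ne_zero _)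

theorem glue_aux {H A M : Type*} [Group H] [CommGroup A] [CommGroup M] (G : Subgroup H)
    (r : A →* H) (hcomm : ∀ g ∈ G, ∀ l : A, g * r l = r l * g) (θ : ↥G →* M) (ψ : A →* M)
    (hc : ∀ (l : A) (h : r l ∈ G), θ ⟨r l, h⟩ = ψ l) :
    ∃! χ : ↥(G ⊔ r.range) →* M,
      (∀ (γ : ↥(G ⊔ r.range)) (hγ : (γ : H) ∈ G), χ γ = θ ⟨(γ : H), hγ⟩) ∧
      (∀ (γ : ↥(G ⊔ r.range)) (l : A), (γ : H) = r l → χ γ = ψ l) := by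
  have hdec : ∀ γ : ↥(G ⊔ r.range), ∃ (g : ↥G) (l : A), (γ : H) = g * r l := by
    rintro ⟨γ, hγ⟩
    have h := MonoidHom.noncommCoprod_range G.subtype r (fun g l => hcomm g g.2 l)
    rw [Subgroup.range_subtype] at h
    rw [← h] at hγ
    obtain ⟨⟨g, l⟩, hgl⟩ := hγ
    exact ⟨g, l, hgl.symm⟩
  have key : ∀ (g g' : ↥G) (l l' : A), (g : H) * r l = g' * r l' → θ g * ψ l = θ g' * ψ l' := by
    intro g g' l l' h
    have h1 : r (l' * l⁻¹) = ((g'⁻¹ * g : ↥G) : H) := by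
      have h2 : (g : H) = g' * r l' * (r l)⁻¹ := eq_mul_inv_of_mul_eq h
      simp [h2, mul_assoc]
    have h3 := hc (l' * l⁻¹) (h1 ▸ (g'⁻¹ * g).2)
    have h4 : (⟨r (l' * l⁻¹), h1 ▸ (g'⁻¹ * g).2⟩ : ↥G) = g'⁻¹ * g := Subtype.ext h1
    rw [h4, map_mul, map_mul, map_inv, map_inv, inv_mul_eq_iff_eq_mul] at h3
    rw [h3]
    simp [mul_assoc]
  choose g l hgl using hdec
  let χ : ↥(G ⊔ r.range) →* M := MonoidHom.mk' (fun γ => θ (g γ) * ψ (l γ)) (by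
    intro x y
    have h := key (g (x * y)) (g x * g y) (l (x * y)) (l x * l y) (by
      rw [← hgl, Subgroup.coe_mul, Subgroup.coe_mul, map_mul, hgl x, hgl y]
      have := hcomm (g y) (g y).2 (l x)
      simp only [mul_assoc]
      rw [← mul_assoc (r (l x)), ← this, mul_assoc])
    rw [h, map_mul, map_mul]
    exact mul_mul_mul_comm _ _ _ _)
  refine ⟨χ, ⟨?_, ?_⟩, ?_⟩
  · intro γ hγ
    have h := key (g γ) ⟨γ, hγ⟩ (l γ) 1 (by rw [← hgl]; simp)
    rw [map_one] at h
    first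
      | exact h.trans (mul_one _)
      | exact h.trans (one_mul _)
  · intro γ m hm
    have h := key (g γ) 1 (l γ) m (by rw [← hgl]; simpa using hm)
    rw [map_one] at h
    first
      | exact h.trans (mul_one _)
      | exact h.trans (one_mul _)
  · rintro χ' ⟨h1, h2⟩
    ext γ
    have hg : (g γ : H) ∈ G ⊔ r.range := (le_sup_left : G ≤ _) (g γ).2
    have hl : r (l γ) ∈ G ⊔ r.range := (le_sup_right : r.range ≤ _) ⟨l γ, rfl⟩
    have h : γ = ⟨g γ, hg⟩ * ⟨r (l γ), hl⟩ := Subtype.ext (hgl γ)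
    calc χ' γ = χ' (⟨g γ, hg⟩ * ⟨r (l γ), hl⟩) := congrArg χ' h
      _ = θ (g γ) * ψ (l γ) := by
        rw [map_mul, h1 _ (g γ).2, h2 _ (l γ) rfl]

theorem prim_aux (d : ℕ) (hd : 1 ≤ d) : IsPrimitiveRoot (primRootUnit d) d := by
  rw [← IsPrimitiveRoot.coe_units_iff]
  exact Complex.isPrimitiveRoot_exp d (by omega)

theorem prim_pow_aux (d : ℕ) (hd : 1 ≤ d) (l : ℂˣ) (hl : l ^ d = 1) :
    ∃ k < d, primRootUnit d ^ k = l := by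
  have : NeZero d := ⟨by omega⟩
  have hp := IsPrimitiveRoot.coe_units_iff.2 (prim_aux d hd)
  have hl' : (l : ℂ) ^ d = 1 := by rw [← Units.val_pow_eq_pow_val, hl, Units.val_one]
  obtain ⟨k, hk, e⟩ := hp.eq_pow_of_pow_eq_one hl'
  exact ⟨k, hk, Units.ext (by rw [Units.val_pow_eq_pow_val, e])⟩

theorem prim_zpow_aux (d : ℕ) (a : ℤ) : ((primRootUnit d ^ a : ℂˣ) : ℂ) =
    Complex.exp (2 * (Real.pi : ℂ) * Complex.I * (a : ℂ) / (d : ℂ)) := by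
  rw [Units.val_zpow_eq_zpow_val]
  simp only [primRootUnit, Units.val_mk0]
  rw [← Complex.exp_int_mul]
  congr 1
  ring

/-- For a character `θ : G → ℂˣ`, one has `J ∈ G` and `θ(J)^d = 1`, and for every
integer `a` with `θ(J) = exp(2πi·a/d)` there is a unique homomorphism `χ̂ : Γ → ℂˣ` restricting
to `θ` on `G` and sending `r(λ)` to `λ^a`.  In particular every character of `G` admits a lift
to `Γ`. -/
theorem stmt_3 (n d : ℕ) (hn : 1 ≤ n) (hd : 1 ≤ d)
    (G : Subgroup (GL (Fin n) ℂ))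
    (r : ℂˣ →* GL (Fin n) ℂ)
    (hrinj : Function.Injective r)
    (hcomm : ∀ g ∈ G, ∀ l : ℂˣ, g * r l = r l * g)
    (hGr : (G : Set (GL (Fin n) ℂ)) ∩ Set.range r = r '' {l : ℂˣ | l ^ d = 1})
    (J : GL (Fin n) ℂ) (hJ : J = r (primRootUnit d))
    (θ : ↥G →* ℂˣ) :
    ∃ hJG : J ∈ G,
      θ ⟨J, hJG⟩ ^ d = 1 ∧
      (∀ a : ℤ,
        ((θ ⟨J, hJG⟩ : ℂˣ) : ℂ)
            = Complex.exp (2 * (Real.pi : ℂ) * Complex.I * (a : ℂ) / (d : ℂ)) →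
        ∃! χ : ↥(G ⊔ r.range) →* ℂˣ,
          (∀ (γ : ↥(G ⊔ r.range)) (hγ : (γ : GL (Fin n) ℂ) ∈ G),
            χ γ = θ ⟨(γ : GL (Fin n) ℂ), hγ⟩) ∧
          (∀ (γ : ↥(G ⊔ r.range)) (l : ℂˣ),
            (γ : GL (Fin n) ℂ) = r l → χ γ = l ^ a)) ∧
      ∃ χ : ↥(G ⊔ r.range) →* ℂˣ,
        ∀ (γ : ↥(G ⊔ r.range)) (hγ : (γ : GL (Fin n) ℂ) ∈ G),
          χ γ = θ ⟨(γ : GL (Fin n) ℂ), hγ⟩ := by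
  have hp := prim_aux d hd
  have : NeZero d := ⟨by omega⟩
  have hJG : J ∈ G := by
    have : J ∈ r '' {l : ℂˣ | l ^ d = 1} := ⟨_, hp.pow_eq_one, hJ.symm⟩
    rw [← hGr] at this
    exact this.1
  have hpow : θ ⟨J, hJG⟩ ^ d = 1 := by
    rw [← map_pow]
    have : (⟨J, hJG⟩ : ↥G) ^ d = 1 := by
      apply Subtype.ext
      simp only [SubmonoidClass.mk_pow, Subgroup.coe_one]
      rw [hJ, ← map_pow, hp.pow_eq_one, map_one]
    rw [this, map_one]
  have main : ∀ a : ℤ, θ ⟨J, hJG⟩ = primRootUnit d ^ a →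
      ∀ (l : ℂˣ) (h : r l ∈ G), θ ⟨r l, h⟩ = zpowGroupHom a l := by
    intro a ha l h
    have h1 : r l ∈ r '' {l : ℂˣ | l ^ d = 1} := hGr ▸ ⟨h, l, rfl⟩
    obtain ⟨l', hl', e⟩ := h1
    obtain rfl := hrinj e
    obtain ⟨k, -, rfl⟩ := prim_pow_aux d hd _ hl'
    have h2 : (⟨r (primRootUnit d ^ k), h⟩ : ↥G) = ⟨J, hJG⟩ ^ k := by
      apply Subtype.ext
      simp [hJ]
    rw [h2, map_pow, ha, zpowGroupHom_apply, ← zpow_natCast, ← zpow_natCast, ← _root_.zpow_mul,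
      ← _root_.zpow_mul, mul_comm]
  refine ⟨hJG, hpow, ?_, ?_⟩
  · intro a ha
    have ha' : θ ⟨J, hJG⟩ = primRootUnit d ^ a := Units.ext (by rw [ha, prim_zpow_aux])
    exact glue_aux G r hcomm θ (zpowGroupHom a) (main a ha')
  · obtain ⟨k, -, hk⟩ := prim_pow_aux d hd _ hpow
    obtain ⟨χ, ⟨h, -⟩, -⟩ := glue_aux G r hcomm θ (zpowGroupHom (k : ℤ))
      (main k (by rw [← hk, zpow_natCast]))
    exact ⟨χ, h⟩
end

section
/- Let G be a subgroup of GL(n,ℂ) and θ : G → ℂˣ a character. There exists a natural number M such that for every integer n' ≥ M and every v ∈ ℂⁿ the following are equivalent: (i) v is θ-semistable for G; (ii) there exist an integer k ≥ 1 and a (θ,k)-equivariant polynomial f of total degree at most k·n' with f(v) ≠ 0. (This identifies the affine semistable locus with the semistable locus for the induced linearization on ℙ(V ⊕ ℂ) with O(n') for all large n'.) -/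
open Matrix Complex MvPolynomial

/-- A polynomial `f` on `ℂⁿ` is `(θ,k)`-equivariant for the subgroup `G ≤ GL(n,ℂ)` if
`f(h·x) = θ(h)^k f(x)` for all `h ∈ G` and `x ∈ ℂⁿ`. -/
def IsEquivariant {n : ℕ} (G : Subgroup (GL (Fin n) ℂ)) (θ : ↥G →* ℂˣ) (k : ℕ)
    (f : MvPolynomial (Fin n) ℂ) : Prop :=
  ∀ (h : ↥G) (x : Fin n → ℂ),
    eval (Matrix.mulVec (((h : GL (Fin n) ℂ) : Matrix (Fin n) (Fin n) ℂ)) x) f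
      = ((θ h : ℂˣ) : ℂ) ^ k * eval x f

/-- A point `v ∈ ℂⁿ` is `θ`-semistable for `G` if some `(θ,k)`-equivariant polynomial
(with `k ≥ 1`) does not vanish at `v`. -/
def IsSemistable {n : ℕ} (G : Subgroup (GL (Fin n) ℂ)) (θ : ↥G →* ℂˣ)
    (v : Fin n → ℂ) : Prop :=
  ∃ k : ℕ, 1 ≤ k ∧ ∃ f : MvPolynomial (Fin n) ℂ,
    IsEquivariant G θ k f ∧ eval v f ≠ 0

/-- there is an `M` such that for all `n' ≥ M`, a point is `θ`-semistable iff
some `(θ,k)`-equivariant polynomial of total degree at most `k·n'` is nonzero at it. -/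
theorem stmt_6 (n : ℕ) (G : Subgroup (GL (Fin n) ℂ)) (θ : ↥G →* ℂˣ) :
    ∃ M : ℕ, ∀ n' : ℕ, M ≤ n' → ∀ v : Fin n → ℂ,
      (IsSemistable G θ v ↔
        ∃ k : ℕ, 1 ≤ k ∧ ∃ f : MvPolynomial (Fin n) ℂ,
          IsEquivariant G θ k f ∧ f.totalDegree ≤ k * n' ∧ eval v f ≠ 0) := by
  let S : Set (MvPolynomial (Fin n) ℂ) := {f | ∃ k : ℕ, 1 ≤ k ∧ IsEquivariant G θ k f}
  obtain ⟨T, hTS, hT⟩ := (Submodule.fg_span_iff_fg_span_finset_subset S).1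
    (IsNoetherian.noetherian (Submodule.span (MvPolynomial (Fin n) ℂ) S))
  refine ⟨T.sup totalDegree, fun n' hn' v => ⟨?_, ?_⟩⟩
  · rintro ⟨k, hk, f, hf, hv⟩
    by_contra hcon
    have hle : Submodule.span (MvPolynomial (Fin n) ℂ) (T : Set (MvPolynomial (Fin n) ℂ))
        ≤ RingHom.ker (eval v) := by
      refine Submodule.span_le.2 fun g hg => ?_
      obtain ⟨l, hl, hgl⟩ := hTS hg
      by_contra hne
      refine hcon ⟨l, hl, g, hgl, ?_, hne⟩
      have h1 : g.totalDegree ≤ T.sup totalDegree := Finset.le_sup (f := totalDegree) hg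
      nlinarith
    have hfS : f ∈ Submodule.span (MvPolynomial (Fin n) ℂ) S :=
      Submodule.subset_span ⟨k, hk, hf⟩
    rw [hT] at hfS
    exact hv (hle hfS)
  · rintro ⟨k, hk, f, hf, -, hv⟩
    exact ⟨k, hk, f, hf, hv⟩
end

section
/- Let θ : G → ℂˣ be a character and let a be an integer with θ(J) = exp(2πi·a/d). Let k ≥ 1 and let f be a (θ,k)-equivariant polynomial for G. Then f can be written as a finite sum f = Σ_m f_m over integers m, where each f_m is a (θ,k)-equivariant polynomial for G that satisfies f_m(r(λ)·x) = λ^m f_m(x) for all λ ∈ ℂˣ and x ∈ ℂⁿ, and f_m = 0 unless m ≡ k·a (mod d). (This is the decomposition of G-invariant sections of L_θ^k into ℂ*_R-eigenspaces, whose weights are all congruent modulo d.) -/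
open Matrix Complex MvPolynomial

theorem aux_eval {n : ℕ} (c : Fin n → ℤ) (m : ℤ) (p : MvPolynomial (Fin n) ℂ)
    (hp : IsWeightedHomogeneous c p m) (l : ℂˣ) (x : Fin n → ℂ) :
    eval (fun i => ((l ^ c i : ℂˣ) : ℂ) * x i) p = ((l ^ m : ℂˣ) : ℂ) * eval x p := by
  rw [eval_eq, eval_eq, Finset.mul_sum]
  refine Finset.sum_congr rfl fun e he => ?_
  have h := hp (mem_support_iff.mp he)
  have h2 : ((l ^ m : ℂˣ) : ℂ) = ∏ i ∈ e.support, ((l ^ c i : ℂˣ) : ℂ) ^ e i := by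
    rw [← h, Finsupp.weight_apply, Finsupp.sum]
    push_cast
    have : ∀ s : Finset (Fin n), (l:ℂ) ^ (∑ i ∈ s, e i • c i) = ∏ i ∈ s, ((l:ℂ) ^ c i) ^ e i := by
      intro s
      induction s using Finset.induction_on with
      | empty => simp
      | insert b s hb ih =>
        rw [Finset.sum_insert hb, Finset.prod_insert hb, zpow_add₀ l.ne_zero, ih, nsmul_eq_mul,
          mul_comm (e b : ℤ) (c b), _root_.zpow_mul, _root_.zpow_natCast]
    exact this _
  simp_rw [mul_pow, Finset.prod_mul_distrib]
  rw [h2]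
  ring

theorem aux_indep (S : Finset ℤ) (A : ℤ → ℂ)
    (h : ∀ l : ℂˣ, ∑ m ∈ S, A m * ((l ^ m : ℂˣ) : ℂ) = 0) : ∀ m ∈ S, A m = 0 := by
  let φ : ℤ → (ℂˣ →* ℂ) := fun m => (Units.coeHom ℂ).comp (zpowGroupHom m)
  have hinj : Function.Injective φ := by
    intro p q hpq
    have h2 := DFunLike.congr_fun hpq (Units.mk0 (2:ℂ) two_ne_zero)
    simp [φ] at h2
    have h3 : (2:ℝ) ^ p = 2 ^ q := by
      have h4 := congrArg (fun z : ℂ => ‖z‖) h2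
      simpa only [norm_zpow, Complex.norm_ofNat] using h4
    exact zpow_right_injective₀ (by norm_num) (by norm_num) h3
  have hl := (linearIndependent_monoidHom ℂˣ ℂ).comp φ hinj
  rw [linearIndependent_iff'] at hl
  refine hl S A ?_
  funext l
  simpa [φ, Finset.sum_apply] using h l

/-- a `(θ,k)`-equivariant polynomial decomposes as a finite sum of
`(θ,k)`-equivariant `ℂ*_R`-eigenpolynomials `f_m` (with `f(r(λ)·x) = λ^m f(x)`), and
`f_m = 0` unless `m ≡ k·a (mod d)`, where `θ(J) = exp(2πi·a/d)`. -/
theorem stmt_7 (n d : ℕ) (hn : 1 ≤ n) (hd : 1 ≤ d)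
    (G : Subgroup (GL (Fin n) ℂ))
    (c : Fin n → ℤ)
    (r : ℂˣ →* GL (Fin n) ℂ)
    (hrdiag : ∀ l : ℂˣ,
      ((r l : GL (Fin n) ℂ) : Matrix (Fin n) (Fin n) ℂ)
        = Matrix.diagonal fun i => ((l ^ c i : ℂˣ) : ℂ))
    (hrinj : Function.Injective r)
    (hcomm : ∀ g ∈ G, ∀ l : ℂˣ, g * r l = r l * g)
    (hGr : (G : Set (GL (Fin n) ℂ)) ∩ Set.range r = r '' {l : ℂˣ | l ^ d = 1})
    (hJG : r (primRootUnit d) ∈ G)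
    (θ : ↥G →* ℂˣ) (a : ℤ)
    (hθJ : ((θ ⟨r (primRootUnit d), hJG⟩ : ℂˣ) : ℂ)
      = Complex.exp (2 * (Real.pi : ℂ) * Complex.I * (a : ℂ) / (d : ℂ)))
    (k : ℕ) (hk : 1 ≤ k)
    (f : MvPolynomial (Fin n) ℂ) (hf : IsEquivariant G θ k f) :
    ∃ F : ℤ → MvPolynomial (Fin n) ℂ,
      (Function.support F).Finite ∧
      f = ∑ᶠ m : ℤ, F m ∧
      (∀ m : ℤ, IsEquivariant G θ k (F m)) ∧
      (∀ (m : ℤ) (l : ℂˣ) (x : Fin n → ℂ),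
        eval (Matrix.mulVec (((r l : GL (Fin n) ℂ) : Matrix (Fin n) (Fin n) ℂ)) x) (F m)
          = ((l ^ m : ℂˣ) : ℂ) * eval x (F m)) ∧
      (∀ m : ℤ, ¬ ((d : ℤ) ∣ (m - k * a)) → F m = 0) := by
  have hmv : ∀ (l : ℂˣ) (x : Fin n → ℂ),
      Matrix.mulVec (((r l : GL (Fin n) ℂ) : Matrix (Fin n) (Fin n) ℂ)) x
        = fun i => ((l ^ c i : ℂˣ) : ℂ) * x i := by
    intro l x
    funext i
    rw [hrdiag, Matrix.mulVec_diagonal]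
  let F : ℤ → MvPolynomial (Fin n) ℂ := fun m => weightedHomogeneousComponent c m f
  have hfin : (Function.support F).Finite := weightedHomogeneousComponent_finsupp f
  have hsum : f = ∑ᶠ m : ℤ, F m := (sum_weightedHomogeneousComponent c f).symm
  have hE : ∀ (m : ℤ) (l : ℂˣ) (x : Fin n → ℂ),
        eval (Matrix.mulVec (((r l : GL (Fin n) ℂ) : Matrix (Fin n) (Fin n) ℂ)) x) (F m)
          = ((l ^ m : ℂˣ) : ℂ) * eval x (F m) := by
    intro m l x
    rw [hmv]
    exact aux_eval c m _ (weightedHomogeneousComponent_isWeightedHomogeneous m f) l x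
  have hev : ∀ (l : ℂˣ) (x : Fin n → ℂ),
      eval (Matrix.mulVec (((r l : GL (Fin n) ℂ) : Matrix (Fin n) (Fin n) ℂ)) x) f
        = ∑ m ∈ hfin.toFinset, ((l ^ m : ℂˣ) : ℂ) * eval x (F m) := by
    intro l x
    conv_lhs => rw [hsum, finsum_eq_sum F hfin, map_sum]
    exact Finset.sum_congr rfl fun m _ => hE m l x
  have hG : ∀ m : ℤ, IsEquivariant G θ k (F m) := by
    intro m h x
    by_cases hm : m ∈ hfin.toFinset
    · have key := aux_indep hfin.toFinset (fun m =>
        eval (Matrix.mulVec (((h : GL (Fin n) ℂ) : Matrix (Fin n) (Fin n) ℂ)) x) (F m)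
          - ((θ h : ℂˣ) : ℂ) ^ k * eval x (F m)) ?_ m hm
      · exact sub_eq_zero.mp key
      · intro l
        have h1 := hf h (Matrix.mulVec ((r l : GL (Fin n) ℂ) : Matrix (Fin n) (Fin n) ℂ) x)
        have hc := congrArg (fun g : GL (Fin n) ℂ => (g : Matrix (Fin n) (Fin n) ℂ))
          (hcomm h h.2 l)
        simp only [Units.val_mul] at hc
        rw [Matrix.mulVec_mulVec, hc, ← Matrix.mulVec_mulVec, hev, hev, Finset.mul_sum,
          ← sub_eq_zero, ← Finset.sum_sub_distrib] at h1
        rw [← h1]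
        refine Finset.sum_congr rfl fun m _ => ?_
        ring
    · have : F m = 0 := by simpa using hm
      simp [this]
  refine ⟨F, hfin, hsum, hG, hE, ?_⟩
  intro m hm
  by_contra hne
  obtain ⟨x, hx⟩ : ∃ x, eval x (F m) ≠ 0 := by
    by_contra! hall
    exact hne (MvPolynomial.funext fun x => by simp [hall x])
  apply hm
  have h1 := hG m ⟨r (primRootUnit d), hJG⟩ x
  rw [hθJ] at h1
  have h2 := (hE m (primRootUnit d) x).symm.trans h1
  have h3 := mul_right_cancel₀ hx h2
  have hd0 : (d : ℂ) ≠ 0 := by exact_mod_cast (by omega : d ≠ 0)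
  rw [Units.val_zpow_eq_zpow_val, primRootUnit, Units.val_mk0, ← Complex.exp_int_mul,
    ← Complex.exp_nat_mul, Complex.exp_eq_exp_iff_exists_int] at h3
  obtain ⟨N, hN⟩ := h3
  refine ⟨N, ?_⟩
  have hpi : (2 * (Real.pi : ℂ) * Complex.I) ≠ 0 := Complex.two_pi_I_ne_zero
  have h4 : (2 * (Real.pi : ℂ) * Complex.I) * (m - k * a : ℂ)
      = (2 * (Real.pi : ℂ) * Complex.I) * (d * N) := by
    field_simp at hN
    linear_combination (2 * (Real.pi : ℂ) * Complex.I) * hN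
  have h5 := mul_left_cancel₀ hpi h4
  exact_mod_cast h5
end

section
/- Let θ : G → ℂˣ be a character. A point v ∈ ℂⁿ is θ-semistable for G if and only if there exist an integer k ≥ 1, an integer m, and a (θ,k)-equivariant polynomial f for G which is in addition an eigenvector for the r-action, i.e., f(r(λ)·x) = λ^m f(x) for all λ ∈ ℂˣ and x ∈ ℂⁿ, such that f(v) ≠ 0. (This is the statement that the θ-semistable locus for G is the union, over all lifts χ̂ of powers of θ to Γ, of the χ̂-semistable loci for Γ.) -/
open Matrix Complex MvPolynomial

/-- The character of weight `m`. -/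
def wchar (m : ℤ) : ℂˣ →* ℂ := (Units.coeHom ℂ).comp (zpowGroupHom m)

lemma wchar_apply (m : ℤ) (l : ℂˣ) : wchar m l = ((l ^ m : ℂˣ) : ℂ) := rfl

lemma wchar_injective : Function.Injective wchar := by
  intro a b h
  have h2 := DFunLike.congr_fun h (Units.mk0 (2 : ℂ) two_ne_zero)
  rw [wchar_apply, wchar_apply] at h2
  simp only [Units.val_zpow_eq_zpow_val, Units.val_mk0] at h2
  have h3 : (2 : ℝ) ^ a = (2 : ℝ) ^ b := by
    have h4 := congrArg norm h2
    rwa [norm_zpow, norm_zpow, Complex.norm_two] at h4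
  exact zpow_right_injective₀ (by norm_num) (by norm_num) h3

lemma laurent_zero (S : Finset ℤ) (a : ℤ → ℂ)
    (h : ∀ l : ℂˣ, ∑ m ∈ S, ((l ^ m : ℂˣ) : ℂ) * a m = 0) : ∀ m ∈ S, a m = 0 := by
  have hli : LinearIndependent ℂ (fun m : ℤ => (wchar m : ℂˣ → ℂ)) :=
    (linearIndependent_monoidHom ℂˣ ℂ).comp wchar wchar_injective
  rw [linearIndependent_iff'] at hli
  apply hli S a
  funext l
  rw [Finset.sum_apply, Pi.zero_apply, ← h l]
  refine Finset.sum_congr rfl fun m _ => ?_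
  simp only [Pi.smul_apply, smul_eq_mul, wchar_apply]
  ring

/-- weight of an exponent -/
def wt {n : ℕ} (c : Fin n → ℤ) (s : Fin n →₀ ℕ) : ℤ := ∑ i, c i * (s i : ℤ)

/-- weight component -/
noncomputable def wcomp {n : ℕ} (c : Fin n → ℤ) (f : MvPolynomial (Fin n) ℂ) (m : ℤ) :
    MvPolynomial (Fin n) ℂ :=
  ∑ s ∈ f.support with wt c s = m, monomial s (coeff s f)

lemma sum_wcomp {n : ℕ} (c : Fin n → ℤ) (f : MvPolynomial (Fin n) ℂ) :
    ∑ m ∈ f.support.image (wt c), wcomp c f m = f := by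
  unfold wcomp
  rw [Finset.sum_fiberwise_of_maps_to (fun s hs => Finset.mem_image_of_mem _ hs)]
  exact (f.as_sum).symm

lemma eval_wcomp {n : ℕ} (c : Fin n → ℤ) (f : MvPolynomial (Fin n) ℂ) (m : ℤ) (l : ℂˣ)
    (x : Fin n → ℂ) :
    eval (Matrix.mulVec (Matrix.diagonal fun i => ((l ^ c i : ℂˣ) : ℂ)) x) (wcomp c f m)
      = ((l ^ m : ℂˣ) : ℂ) * eval x (wcomp c f m) := by
  unfold wcomp
  rw [map_sum, map_sum, Finset.mul_sum]
  refine Finset.sum_congr rfl fun s hs => ?_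
  obtain rfl := (Finset.mem_filter.1 hs).2
  have hl : ((l ^ wt c s : ℂˣ) : ℂ) = ∏ i, (((l ^ c i : ℂˣ) : ℂ)) ^ (s i) := by
    have : (l ^ wt c s : ℂˣ) = ∏ i, (l ^ c i) ^ (s i) := by
      have := map_sum (zmultiplesHom (Additive ℂˣ) (Additive.ofMul l))
        (fun i => c i * (s i : ℤ)) Finset.univ
      have h2 : l ^ wt c s = ∏ i, l ^ (c i * (s i : ℤ)) := this
      rw [h2]
      refine Finset.prod_congr rfl fun i _ => ?_
      rw [_root_.zpow_mul, zpow_natCast]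
    rw [this]
    push_cast
    rfl
  rw [eval_monomial, eval_monomial, hl, Finsupp.prod_fintype _ _ (by simp),
    Finsupp.prod_fintype _ _ (by simp)]
  simp only [Matrix.mulVec_diagonal, mul_pow, Finset.prod_mul_distrib]
  ring

/-- a point is `θ`-semistable for `G` iff some `(θ,k)`-equivariant polynomial
which is moreover an eigenvector of weight `m` for the `r`-action is nonzero at it
(i.e. the `G`-semistable locus is the union of `Γ`-semistable loci over all lifts). -/
theorem stmt_8 (n d : ℕ) (hn : 1 ≤ n) (hd : 1 ≤ d)
    (G : Subgroup (GL (Fin n) ℂ))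
    (c : Fin n → ℤ)
    (r : ℂˣ →* GL (Fin n) ℂ)
    (hrdiag : ∀ l : ℂˣ,
      ((r l : GL (Fin n) ℂ) : Matrix (Fin n) (Fin n) ℂ)
        = Matrix.diagonal fun i => ((l ^ c i : ℂˣ) : ℂ))
    (hrinj : Function.Injective r)
    (hcomm : ∀ g ∈ G, ∀ l : ℂˣ, g * r l = r l * g)
    (hGr : (G : Set (GL (Fin n) ℂ)) ∩ Set.range r = r '' {l : ℂˣ | l ^ d = 1})
    (θ : ↥G →* ℂˣ) (v : Fin n → ℂ) :
    IsSemistable G θ v ↔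
      ∃ k : ℕ, 1 ≤ k ∧ ∃ m : ℤ, ∃ f : MvPolynomial (Fin n) ℂ,
        IsEquivariant G θ k f ∧
        (∀ (l : ℂˣ) (x : Fin n → ℂ),
          eval (Matrix.mulVec (((r l : GL (Fin n) ℂ) : Matrix (Fin n) (Fin n) ℂ)) x) f
            = ((l ^ m : ℂˣ) : ℂ) * eval x f) ∧
        eval v f ≠ 0 := by
  constructor
  · rintro ⟨k, hk, f, hf, hv⟩
    have hex : ∃ m ∈ f.support.image (wt c), eval v (wcomp c f m) ≠ 0 := by
      by_contra! hcon
      apply hv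
      rw [← sum_wcomp c f, map_sum]
      exact Finset.sum_eq_zero hcon
    obtain ⟨m, hm, hmv⟩ := hex
    have hr : ∀ (m : ℤ) (l : ℂˣ) (x : Fin n → ℂ),
        eval (Matrix.mulVec (((r l : GL (Fin n) ℂ) : Matrix (Fin n) (Fin n) ℂ)) x) (wcomp c f m)
            = ((l ^ m : ℂˣ) : ℂ) * eval x (wcomp c f m) := by
      intro m l x
      rw [hrdiag]
      exact eval_wcomp c f m l x
    have hrf : ∀ (l : ℂˣ) (x : Fin n → ℂ),
        eval (Matrix.mulVec (((r l : GL (Fin n) ℂ) : Matrix (Fin n) (Fin n) ℂ)) x) f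
            = ∑ m ∈ f.support.image (wt c), ((l ^ m : ℂˣ) : ℂ) * eval x (wcomp c f m) := by
      intro l x
      conv_lhs => rw [← sum_wcomp c f]
      rw [map_sum]
      exact Finset.sum_congr rfl fun m _ => hr m l x
    refine ⟨k, hk, m, wcomp c f m, ?_, hr m, hmv⟩
    intro h x
    refine sub_eq_zero.1 (laurent_zero (f.support.image (wt c))
      (fun m => eval (Matrix.mulVec (((h : GL (Fin n) ℂ) : Matrix (Fin n) (Fin n) ℂ)) x)
        (wcomp c f m) - ((θ h : ℂˣ) : ℂ) ^ k * eval x (wcomp c f m)) ?_ m hm)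
    intro l
    have e := hf h (Matrix.mulVec (((r l : GL (Fin n) ℂ) : Matrix (Fin n) (Fin n) ℂ)) x)
    have hc := congrArg (fun g : GL (Fin n) ℂ => (g : Matrix (Fin n) (Fin n) ℂ))
      (hcomm h h.2 l)
    simp only [Units.val_mul] at hc
    rw [Matrix.mulVec_mulVec, hc, ← Matrix.mulVec_mulVec, hrf, hrf, Finset.mul_sum] at e
    rw [← sub_eq_zero, ← Finset.sum_sub_distrib] at e
    rw [← e]
    refine Finset.sum_congr rfl fun m _ => ?_
    ring
  · rintro ⟨k, hk, m, f, hf, -, hv⟩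
    exact ⟨k, hk, f, hf, hv⟩
end

section
/- Let Γ be a group, let Z be a subgroup of Γ contained in the center of Γ, and let G be a subgroup of Γ such that every element of Γ can be written as a product g·z with g ∈ G and z ∈ Z. Let B' be a solvable subgroup of G that is maximal among all solvable subgroups of G. Then the subgroup B of Γ generated by B' and Z satisfies: (i) B is solvable; (ii) B ∩ G = B'; and (iii) B is maximal among all solvable subgroups of Γ. -/
/-- Let `Γ` be a group, `Z` a central subgroup, and `G` a subgroup such that
every element of `Γ` is a product `g·z` with `g ∈ G`, `z ∈ Z`.  If `B'` is a maximal solvable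
subgroup of `G`, then `B = ⟨B', Z⟩` is solvable, `B ∩ G = B'`, and `B` is maximal among all
solvable subgroups of `Γ`. -/
theorem stmt_10 (Γ : Type*) [Group Γ] (Z G B' : Subgroup Γ)
    (hZcentral : Z ≤ Subgroup.center Γ)
    (hdecomp : ∀ γ : Γ, ∃ g ∈ G, ∃ z ∈ Z, γ = g * z)
    (hB'G : B' ≤ G)
    (hB'solv : IsSolvable ↥B')
    (hB'max : ∀ C : Subgroup Γ, C ≤ G → IsSolvable ↥C → B' ≤ C → C = B') :
    IsSolvable ↥(B' ⊔ Z) ∧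
    (B' ⊔ Z) ⊓ G = B' ∧
    ∀ C : Subgroup Γ, IsSolvable ↥C → B' ⊔ Z ≤ C → C = B' ⊔ Z := by
  have hsolv : Group.IsSolvable ↥(B' ⊔ Z) := by
    have hBs : Group.IsSolvable ↥B' := hB'solv
    have hZs : Group.IsSolvable ↥Z := Group.isSolvable_of_comm fun a b =>
      Subtype.ext ((Subgroup.mem_center_iff.mp (hZcentral b.2)) a)
    have hc : ∀ (m : B') (n : Z), Commute (B'.subtype m) (Z.subtype n) := fun m n =>
      (Subgroup.mem_center_iff.mp (hZcentral n.2)) m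
    have hr : (MonoidHom.noncommCoprod B'.subtype Z.subtype hc).range = B' ⊔ Z := by
      rw [MonoidHom.noncommCoprod_range, Subgroup.range_subtype, Subgroup.range_subtype]
    rw [← hr]
    exact Group.isSolvable_of_surjective (MonoidHom.rangeRestrict_surjective _)
  have hsub : ∀ H K : Subgroup Γ, H ≤ K → Group.IsSolvable ↥K → Group.IsSolvable ↥H := fun H K h hK =>
    Group.isSolvable_of_isSolvable_injective (Subgroup.inclusion_injective h)
  refine ⟨hsolv, hB'max _ inf_le_right (hsub _ _ inf_le_left hsolv) (le_inf le_sup_left hB'G), ?_⟩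
  intro C hC hBC
  have hCG : C ⊓ G = B' := hB'max _ inf_le_right (hsub _ _ inf_le_left hC)
    (le_inf (le_sup_left.trans hBC) hB'G)
  refine le_antisymm (fun c hc => ?_) hBC
  obtain ⟨g, hg, z, hz, rfl⟩ := hdecomp c
  have hzB : z ∈ B' ⊔ Z := Subgroup.mem_sup_right hz
  have hgC : g ∈ C := (Subgroup.mul_mem_cancel_right C (hBC hzB)).mp hc
  exact mul_mem (Subgroup.mem_sup_left (hCG ▸ Subgroup.mem_inf.mpr ⟨hgC, hg⟩)) hzB
end

section
/- Let W ∈ ℂ[x_1,…,x_N] be a polynomial, let S ⊆ {1,…,N}, and let λ_1,…,λ_N ∈ ℂˣ satisfy λ_i = 1 for i ∈ S and λ_i ≠ 1 for i ∉ S. Assume that W(λ_1 x_1,…,λ_N x_N) = W(x_1,…,x_N) for all x ∈ ℂ^N, and that the restriction of W to the fixed subspace {x : x_j = 0 for all j ∉ S} is a constant function. Then for every i ∈ {1,…,N}, the partial derivative ∂W/∂x_i vanishes at every point of the fixed subspace {x : x_j = 0 for all j ∉ S}; i.e., dW = 0 on the fixed locus of the diagonal symmetry. -/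
open MvPolynomial

theorem aux_hasDerivAt {N : ℕ} (W : MvPolynomial (Fin N) ℂ) (i : Fin N) (x : Fin N → ℂ) (t : ℂ) :
    HasDerivAt (fun s => eval (Function.update x i s) W)
      (eval (Function.update x i t) (pderiv i W)) t := by
  induction W using MvPolynomial.induction_on with
  | C a => simpa using hasDerivAt_const t a
  | add p q hp hq =>
    simp only [map_add]
    exact hp.add hq
  | mul_X p j hp =>
    have hX : HasDerivAt (fun s => Function.update x i s j)
        (eval (Function.update x i t) (pderiv i (X j : MvPolynomial (Fin N) ℂ))) t := by
      by_cases h : j = i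
      · subst h
        simpa using hasDerivAt_id' t
      · simpa [pderiv_X_of_ne h, Function.update_of_ne h] using hasDerivAt_const t (x j)
    have h := hp.mul hX
    simp only [pderiv_mul, map_add, map_mul, eval_X]
    exact h

/-- If `W` is invariant under the diagonal symmetry `x ↦ (λ₁x₁,…,λ_Nx_N)` whose
fixed coordinates are exactly those in `S`, and the restriction of `W` to the fixed subspace
`{x : x_j = 0 for j ∉ S}` is constant, then every partial derivative `∂W/∂x_i` vanishes at
every point of the fixed subspace. -/
theorem stmt_11 (N : ℕ) (W : MvPolynomial (Fin N) ℂ) (S : Set (Fin N))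
    (l : Fin N → ℂˣ)
    (hlS : ∀ i ∈ S, l i = 1)
    (hlnS : ∀ i ∉ S, l i ≠ 1)
    (hinv : ∀ x : Fin N → ℂ,
      eval (fun i => ((l i : ℂˣ) : ℂ) * x i) W = eval x W)
    (hconst : ∀ x y : Fin N → ℂ, (∀ j ∉ S, x j = 0) → (∀ j ∉ S, y j = 0) →
      eval x W = eval y W) :
    ∀ (i : Fin N) (x : Fin N → ℂ), (∀ j ∉ S, x j = 0) →
      eval x (pderiv i W) = 0 := by
  intro i x hx
  have hd := aux_hasDerivAt W i x
  by_cases hi : i ∈ S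
  · have hc : (fun s => eval (Function.update x i s) W) = fun _ => eval x W := by
      funext s
      refine hconst _ _ (fun j hj => ?_) hx
      have hji : j ≠ i := fun h => hj (h ▸ hi)
      rw [Function.update_of_ne hji, hx j hj]
    have h1 := hd (x i)
    rw [hc, Function.update_eq_self] at h1
    exact h1.unique (hasDerivAt_const _ _)
  · have hx0 : Function.update x i 0 = x := by
      rw [← hx i hi, Function.update_eq_self]
    have h0 := hd 0
    have h1 : HasDerivAt (fun s : ℂ => (l i : ℂ) * s) (l i : ℂ) 0 := by
      simpa using (hasDerivAt_id' (0 : ℂ)).const_mul (l i : ℂ)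
    have h2 := hd ((l i : ℂ) * 0)
    have h3 := HasDerivAt.comp (0 : ℂ) h2 h1
    have hc : ((fun s => eval (Function.update x i s) W) ∘ fun s : ℂ => (l i : ℂ) * s)
        = fun s => eval (Function.update x i s) W := by
      funext s
      rw [Function.comp_apply, ← hinv (Function.update x i s)]
      congr 2
      funext j
      by_cases h : j = i
      · subst h
        simp
      · rw [Function.update_of_ne h, Function.update_of_ne h]
        by_cases hj : j ∈ S
        · simp [hlS j hj]
        · simp [hx j hj]
    rw [hc, mul_zero, hx0] at h3
    rw [hx0] at h0
    have h4 := h0.unique h3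
    by_contra hne
    refine hlnS i hi (Units.ext ?_)
    have h5 : eval x (pderiv i W) * 1 = eval x (pderiv i W) * (l i : ℂ) := by
      rw [mul_one]; exact h4
    simpa using (mul_left_cancel₀ hne h5).symm
end
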